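/- arXiv:1412.4837 — 2 statements merged into one kernel-verified Lean document; each statement's English description precedes it below -/
import Mathlib

section
/- Let c and d be chip configurations and suppose c ⤳ d via a finite sequence of legal firing moves in which the vertex s is fired exactly m times. Then ĉ + m·β_s ⤳_s d̂, i.e. the associated sequence of s-firing moves (obtained by omitting the firings of s) is legal for ĉ + m·β_s and leads to d̂, where ĉ and d̂ are the restrictions of c and d to V∖{s}. -/
open Finset Polynomial

namespace SandpileBM

variable {V E : Type} [Fintype V] [DecidableEq V] [Fintype E] [DecidableEq E]

/-- The number of edges from `v` to `w` in the multigraph given by `src`, `tgt`. -/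
def numEdges (src tgt : E → V) (v w : V) : ℕ :=
  (Finset.univ.filter fun e => src e = v ∧ tgt e = w).card

/-- The out-degree of a vertex. -/
def outdeg (src : E → V) (v : V) : ℕ :=
  (Finset.univ.filter fun e => src e = v).card

/-- The in-degree of a vertex. -/
def indeg (tgt : E → V) (v : V) : ℕ :=
  (Finset.univ.filter fun e => tgt e = v).card

/-- The digraph is strongly connected: any vertex is reachable from any other by
a directed path. -/
def StronglyConnected (src tgt : E → V) : Prop :=
  ∀ v w : V, Relation.ReflTransGen (fun a b => ∃ e : E, src e = a ∧ tgt e = b) v w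

/-- Result of firing the vertex `v` on the chip configuration `c` (sinkless model). -/
def fire (src tgt : E → V) (c : V → ℕ) (v : V) : V → ℕ :=
  fun w => c w + numEdges src tgt v w - (if w = v then outdeg src v else 0)

/-- One legal firing move in the sinkless model. -/
def FireStep (src tgt : E → V) (c d : V → ℕ) : Prop :=
  ∃ v : V, outdeg src v ≤ c v ∧ d = fire src tgt c v

/-- `Reach c d`: `d` is obtained from `c` by a finite sequence of legal firing moves. -/
def Reach (src tgt : E → V) : (V → ℕ) → (V → ℕ) → Prop :=
  Relation.ReflTransGen (FireStep src tgt)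

/-- Stability of a chip configuration. -/
def Stable (src : E → V) (c : V → ℕ) : Prop :=
  ∀ v : V, c v < outdeg src v

/-- A chip configuration is recurrent if it is not stable and every configuration
accessible from it can reach it back. -/
def Recurrent (src tgt : E → V) (c : V → ℕ) : Prop :=
  ¬ Stable src c ∧ ∀ d : V → ℕ, Reach src tgt c d → Reach src tgt d c

/-- Level (total number of chips) of a chip configuration. -/
def lvl (c : V → ℕ) : ℕ := ∑ v : V, c v

/-- Indicator function of the vertex `s`. -/
def deltaS (s : V) : V → ℕ := fun v => if v = s then 1 else 0

/-- Result of firing the vertex `v` on an `s`-configuration. -/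
def sfire (src tgt : E → V) (s : V) (c : {v : V // v ≠ s} → ℕ) (v : {v : V // v ≠ s}) :
    {v : V // v ≠ s} → ℕ :=
  fun w => c w + numEdges src tgt v.1 w.1 - (if w = v then outdeg src v.1 else 0)

/-- One legal s-firing move. -/
def SFireStep (src tgt : E → V) (s : V) (c d : {v : V // v ≠ s} → ℕ) : Prop :=
  ∃ v : {v : V // v ≠ s}, outdeg src v.1 ≤ c v ∧ d = sfire src tgt s c v

/-- `SReach c d`: `d` is obtained from `c` by a finite sequence of legal s-firing moves. -/
def SReach (src tgt : E → V) (s : V) :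
    ({v : V // v ≠ s} → ℕ) → ({v : V // v ≠ s} → ℕ) → Prop :=
  Relation.ReflTransGen (SFireStep src tgt s)

/-- Stability of an `s`-configuration. -/
def SStable (src : E → V) (s : V) (c : {v : V // v ≠ s} → ℕ) : Prop :=
  ∀ v : {v : V // v ≠ s}, c v < outdeg src v.1

/-- The stabilization `c°` of an `s`-configuration: the (for strongly connected digraphs,
unique) stable `s`-configuration reachable from `c` by legal s-firing moves. -/
noncomputable def stab (src tgt : E → V) (s : V) (c : {v : V // v ≠ s} → ℕ) :
    {v : V // v ≠ s} → ℕ :=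
  Classical.epsilon fun d => SReach src tgt s c d ∧ SStable src s d

/-- An `s`-configuration `c` is s-recurrent if every `s`-configuration can be completed
to one whose stabilization is `c`. -/
def SRecurrent (src tgt : E → V) (s : V) (c : {v : V // v ≠ s} → ℕ) : Prop :=
  ∀ c₁ : {v : V // v ≠ s} → ℕ, ∃ c₂ : {v : V // v ≠ s} → ℕ,
    stab src tgt s (c₁ + c₂) = c

/-- `β_s`, recording the number of edges from `s` to each other vertex. -/
def betaS (src tgt : E → V) (s : V) : {v : V // v ≠ s} → ℕ :=
  fun v => numEdges src tgt s v.1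

/-- The relation `~_s` on s-recurrent configurations: `d = (c + k·β_s)°` for some `k`. -/
def SEquiv (src tgt : E → V) (s : V) (c d : {v : V // v ≠ s} → ℕ) : Prop :=
  ∃ k : ℕ, stab src tgt s (c + k • betaS src tgt s) = d

/-- Restriction of a chip configuration to `V ∖ {s}`. -/
def restrictS (s : V) (c : V → ℕ) : {v : V // v ≠ s} → ℕ := fun v => c v.1

/-- Extension `c̄` of an `s`-configuration by `0` at `s`. -/
def extendS (s : V) (c : {v : V // v ≠ s} → ℕ) : V → ℕ :=
  fun v => if h : v = s then 0 else c ⟨v, h⟩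

/-- The s-index `χ(c)`: the least `k` such that `c̄ + k·δ_s` is recurrent. -/
noncomputable def sIndex (src tgt : E → V) (s : V) (c : {v : V // v ≠ s} → ℕ) : ℕ :=
  sInf {k : ℕ | Recurrent src tgt (extendS s c + k • deltaS s)}

/-- `φ(c) := c̄ + χ(c)·δ_s`. -/
noncomputable def phi (src tgt : E → V) (s : V) (c : {v : V // v ≠ s} → ℕ) : V → ℕ :=
  extendS s c + sIndex src tgt s c • deltaS s

/-- The s-level `slvl(c) := χ(c) + Σ_{v ≠ s} c(v)`. -/
noncomputable def slvl (src tgt : E → V) (s : V) (c : {v : V // v ≠ s} → ℕ) : ℕ :=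
  sIndex src tgt s c + ∑ v : {v : V // v ≠ s}, c v

/-- The d-level `dlvl(c) := deg⁺(s) + Σ_{v ≠ s} c(v)`. -/
def dlvl (src : E → V) (s : V) (c : {v : V // v ≠ s} → ℕ) : ℕ :=
  outdeg src s + ∑ v : {v : V // v ≠ s}, c v

/-- The set (as a type) of recurrent chip configurations. -/
abbrev RecL (src tgt : E → V) := {c : V → ℕ // Recurrent src tgt c}

/-- The setoid on recurrent configurations generated by the relation `~` (i.e. `⤳`). -/
def recLSetoid (src tgt : E → V) : Setoid (RecL src tgt) :=
  Relation.EqvGen.setoid fun a b => Reach src tgt a.1 b.1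

/-- The set of `~`-classes of recurrent configurations. -/
abbrev RecLQuot (src tgt : E → V) := Quotient (recLSetoid src tgt)

/-- The set (as a type) of s-recurrent configurations. -/
abbrev RecS (src tgt : E → V) (s : V) := {c : {v : V // v ≠ s} → ℕ // SRecurrent src tgt s c}

/-- The setoid on s-recurrent configurations generated by the relation `~_s`. -/
def recSSetoid (src tgt : E → V) (s : V) : Setoid (RecS src tgt s) :=
  Relation.EqvGen.setoid fun a b => SEquiv src tgt s a.1 b.1

/-- The set of `~_s`-classes of s-recurrent configurations. -/
abbrev RecSQuot (src tgt : E → V) (s : V) := Quotient (recSSetoid src tgt s)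

/-- The level of a `~`-class of recurrent configurations (level is constant on classes). -/
noncomputable def lvlClass (src tgt : E → V) (q : RecLQuot src tgt) : ℕ :=
  sSup ((fun c : RecL src tgt => lvl c.1) '' {c | Quotient.mk (recLSetoid src tgt) c = q})

/-- The s-level of a `~_s`-class (s-level is constant on classes). -/
noncomputable def slvlClass (src tgt : E → V) (s : V) (q : RecSQuot src tgt s) : ℕ :=
  sSup ((fun c : RecS src tgt s => slvl src tgt s c.1) ''
    {c | Quotient.mk (recSSetoid src tgt s) c = q})

/-- The d-level of a `~_s`-class: the maximum d-level over the class. -/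
noncomputable def dlvlClass (src tgt : E → V) (s : V) (q : RecSQuot src tgt s) : ℕ :=
  sSup ((fun c : RecS src tgt s => dlvl src s c.1) ''
    {c | Quotient.mk (recSSetoid src tgt s) c = q})

/-- The Biggs–Merino polynomial `B(G,s;y) = Σ_{[c] ∈ Rec(G,s)/~_s} y^{dlvl([c])}`. -/
noncomputable def BM (src tgt : E → V) (s : V) : Polynomial ℤ :=
  ∑ᶠ q : RecSQuot src tgt s, X ^ dlvlClass src tgt s q

/-- `LegalSeq l c d`: firing the vertices in the list `l` in order is a sequence of
legal firing moves transforming `c` into `d` (sinkless model). -/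
def LegalSeq (src tgt : E → V) : List V → (V → ℕ) → (V → ℕ) → Prop
  | [], c, d => d = c
  | v :: l, c, d => outdeg src v ≤ c v ∧ LegalSeq src tgt l (fire src tgt c v) d

/-- `SLegalSeq l c d`: firing the vertices in the list `l` in order is a sequence of
legal s-firing moves transforming `c` into `d`. -/
def SLegalSeq (src tgt : E → V) (s : V) :
    List {v : V // v ≠ s} → ({v : V // v ≠ s} → ℕ) → ({v : V // v ≠ s} → ℕ) → Prop
  | [], c, d => d = c
  | v :: l, c, d => outdeg src v.1 ≤ c v ∧ SLegalSeq src tgt s l (sfire src tgt s c v) d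

/-- The configuration obtained from `c` after firing the vertices of `l` in order. -/
def iterFire (src tgt : E → V) (c : V → ℕ) (l : List V) : V → ℕ :=
  l.foldl (fire src tgt) c

/-- The Laplacian of the digraph applied to an integer vector:
`(Δq)(v) = deg⁺(v)·q(v) − Σ_w A(w,v)·q(w)`. -/
def lapApply (src tgt : E → V) (q : V → ℤ) : V → ℤ :=
  fun v => (outdeg src v : ℤ) * q v - ∑ w : V, (numEdges src tgt w v : ℤ) * q w

/-- `r` is the primitive period vector of the digraph: it has positive entries with
gcd `1`, lies in the kernel of the Laplacian, and generates this kernel. -/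
def IsPeriodVector (src tgt : E → V) (r : V → ℕ) : Prop :=
  (∀ v : V, 0 < r v) ∧ Finset.univ.gcd r = 1 ∧
    lapApply src tgt (fun v => (r v : ℤ)) = 0 ∧
    ∀ q : V → ℤ, lapApply src tgt q = 0 → ∃ k : ℤ, q = k • fun v => (r v : ℤ)

/-- The Laplacian matrix of the digraph. -/
def lapMatrix (src tgt : E → V) : Matrix V V ℤ :=
  Matrix.of fun v w =>
    if v = w then (outdeg src v : ℤ) - numEdges src tgt v v
    else -(numEdges src tgt w v : ℤ)

/-- The determinant of the reduced Laplacian obtained by deleting the row and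
column indexed by `v`. -/
def reducedLapDet (src tgt : E → V) (v : V) : ℤ :=
  (((lapMatrix src tgt).submatrix (fun a : {w : V // w ≠ v} => a.1)
    (fun a : {w : V // w ≠ v} => a.1)).det)

/-- The period constant `α := gcd_{v ∈ V} det Δ_v`. -/
def periodConstant (src tgt : E → V) : ℤ :=
  Finset.univ.gcd (reducedLapDet src tgt)

/-- `IsWalk l a b`: the list of edges `l` forms a directed walk from `a` to `b`. -/
def IsWalk (src tgt : E → V) : List E → V → V → Prop
  | [], a, b => a = b
  | e :: l, a, b => src e = a ∧ IsWalk src tgt l (tgt e) b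

/-- `IsPath l a b`: the list of edges `l` forms a directed path from `a` to `b`:
all visited vertices are distinct (except that the final vertex is allowed to
coincide with the starting vertex). -/
def IsPath (src tgt : E → V) (l : List E) (a b : V) : Prop :=
  IsWalk src tgt l a b ∧ (l.map tgt).Nodup ∧ a ∉ (l.map tgt).dropLast

/-- `T` is an arborescence rooted at `s`: for every vertex `v` there is a unique
directed path from `s` to `v` using only edges of `T`. -/
def IsArborescence (src tgt : E → V) (s : V) (T : Finset E) : Prop :=
  ∀ v : V, ∃! l : List E, (∀ e ∈ l, e ∈ T) ∧ IsPath src tgt l s v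

/-- The edge `e ∉ T` is externally active for the arborescence `T` (w.r.t. the linear
order on `E`): where `P₁`, `P₂` are the two edge-disjoint directed paths in `T ∪ {e}`
sharing their starting vertex and ending at `tgt e`, with `e ∈ P₁`, the smallest edge
on `P₁ ++ P₂` lies on `P₁`. -/
def ExtActive [LinearOrder E] (src tgt : E → V) (T : Finset E) (e : E) : Prop :=
  e ∉ T ∧ ∃ (u : V) (p₁ p₂ : List E),
    (∀ f ∈ p₁, f ∈ T ∨ f = e) ∧ (∀ f ∈ p₂, f ∈ T ∨ f = e) ∧
    IsPath src tgt p₁ u (tgt e) ∧ IsPath src tgt p₂ u (tgt e) ∧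
    e ∈ p₁ ∧ (∀ f ∈ p₁, f ∉ p₂) ∧
    ∃ fmin ∈ p₁, ∀ f ∈ p₁ ++ p₂, fmin ≤ f

/-- The external activity `e(T)` of an arborescence `T`. -/
noncomputable def extActivity [LinearOrder E] (src tgt : E → V) (T : Finset E) : ℕ :=
  Nat.card {e : E // ExtActive src tgt T e}

/-- The greedoid Tutte polynomial `T(G,s;y) = Σ_{T ∈ A(G,s)} y^{e(T)}`. -/
noncomputable def greedoidTutte [LinearOrder E] (src tgt : E → V) (s : V) : Polynomial ℤ :=
  ∑ᶠ T : {T : Finset E // IsArborescence src tgt s T}, X ^ extActivity src tgt T.1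

/-- `f` is a `G^r`-parking function rooted at `s`. -/
def IsParking (src tgt : E → V) (s : V) (f : {v : V // v ≠ s} → ℕ) : Prop :=
  ∀ A : Finset {v : V // v ≠ s}, A.Nonempty →
    ∃ v ∈ A, f v < Nat.card {e : E // (∀ w ∈ A, src e ≠ w.1) ∧ tgt e = v.1}

/-- The d-level of a `G^r`-parking function: `|E| − |V| + 1 − Σ_{v≠s} f(v)`. -/
noncomputable def parkDlvl (src : E → V) (s : V) (f : {v : V // v ≠ s} → ℕ) : ℕ :=
  ((Fintype.card E : ℤ) - Fintype.card V + 1 - ∑ v : {v : V // v ≠ s}, (f v : ℤ)).toNat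

/-- `σ` is an s-decreasing traversal: a sequence in which every vertex and edge of `G`
appears exactly once, satisfying (R1) every vertex other than `s` is immediately
preceded by an edge targeting it, and (R2) every edge is the `<ₑ`-maximum edge not yet
seen whose source has been seen. -/
def IsTraversal [LinearOrder E] (src tgt : E → V) (s : V) (σ : List (V ⊕ E)) : Prop :=
  σ.Nodup ∧ (∀ x : V ⊕ E, x ∈ σ) ∧
  (∀ (i : ℕ) (hi : i < σ.length) (v : V),
      σ.get ⟨i, hi⟩ = Sum.inl v → v ≠ s →
      0 < i ∧ ∃ e : E, tgt e = v ∧ σ.get ⟨i - 1, by omega⟩ = Sum.inr e) ∧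
  (∀ (i : ℕ) (hi : i < σ.length) (e : E),
      σ.get ⟨i, hi⟩ = Sum.inr e →
      Sum.inl (src e) ∈ σ.take i ∧
      ∀ f : E, Sum.inr f ∉ σ.take i → Sum.inl (src f) ∈ σ.take i → f ≤ e)

open scoped Classical in
/-- `Υ(σ)`: the set of edges immediately preceding a non-sink vertex in `σ`. -/
noncomputable def Upsilon (src tgt : E → V) (s : V) (σ : List (V ⊕ E)) : Finset E :=
  Finset.univ.filter fun e =>
    ∃ (i : ℕ) (hi : i < σ.length) (v : V), v ≠ s ∧ σ.get ⟨i, hi⟩ = Sum.inl v ∧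
      0 < i ∧ ∃ hj : i - 1 < σ.length, σ.get ⟨i - 1, hj⟩ = Sum.inr e

/-- The strength of `σ`: the number of strong edges, i.e. edges whose target appears
before them in `σ`. -/
noncomputable def strength (tgt : E → V) (σ : List (V ⊕ E)) : ℕ :=
  Nat.card {e : E // ∃ (i : ℕ) (hi : i < σ.length),
    σ.get ⟨i, hi⟩ = Sum.inr e ∧ Sum.inl (tgt e) ∈ σ.take i}

/-- `Ψ(σ)(v)`: one less than the number of edges targeting `v` that appear before the
vertex `v` in `σ`. -/
def Psi (tgt : E → V) (s : V) (σ : List (V ⊕ E)) : {v : V // v ≠ s} → ℕ :=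
  fun v =>
    (((σ.takeWhile fun x => x ≠ Sum.inl v.1).filterMap Sum.getRight?).filter
      fun e => tgt e = v.1).length - 1

/-! All chips that the firings of `s` send out of `s` can be supplied in advance: each firing of `s`
in the original sequence only draws one copy of `β_s` from this supply, and any other legal firing
stays legal, with the same effect, in the presence of additional chips. -/

section OmitFirings

omit [Fintype V]

/-- The sequence of s-firing moves associated with a firing sequence, obtained by omitting the
firings of `s`. -/
def omitS (s : V) (l : List V) : List {v : V // v ≠ s} :=
  l.filterMap fun v => if hv : v = s then none else some ⟨v, hv⟩

theorem omitS_cons_self (s : V) (l : List V) : omitS s (s :: l) = omitS s l := by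
  simp [omitS]

theorem omitS_cons_of_ne {s v : V} (hv : v ≠ s) (l : List V) :
    omitS s (v :: l) = ⟨v, hv⟩ :: omitS s l := by
  simp [omitS, hv]

omit [DecidableEq E]

variable {src tgt : E → V} {s : V}

theorem restrictS_fire_self (c : V → ℕ) :
    restrictS s (fire src tgt c s) = restrictS s c + betaS src tgt s := by
  funext w
  simp [restrictS, fire, betaS, w.2]

theorem restrictS_fire_of_ne {v : V} (hv : v ≠ s) (c : V → ℕ) :
    restrictS s (fire src tgt c v) = sfire src tgt s (restrictS s c) ⟨v, hv⟩ := by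
  funext w
  simp only [restrictS, fire, sfire, Subtype.ext_iff]

theorem sfire_add {c : {v : V // v ≠ s} → ℕ} {v : {v : V // v ≠ s}}
    (hv : outdeg src v.1 ≤ c v) (b : {v : V // v ≠ s} → ℕ) :
    sfire src tgt s (c + b) v = sfire src tgt s c v + b := by
  funext w
  rcases eq_or_ne w v with rfl | hw
  · simp only [sfire, Pi.add_apply, if_true]
    omega
  · simp only [sfire, Pi.add_apply, if_neg hw]
    omega

theorem legalSeq_restricts_general {l : List V} {c d : V → ℕ} (h : LegalSeq src tgt l c d) :
    SLegalSeq src tgt s (omitS s l) (restrictS s c + l.count s • betaS src tgt s)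
      (restrictS s d) := by
  induction l generalizing c with
  | nil =>
    obtain rfl : d = c := h
    simp [omitS, SLegalSeq]
  | cons v l ih =>
    obtain ⟨hlegal, hl⟩ := h
    rcases eq_or_ne v s with rfl | hv
    · rw [omitS_cons_self, List.count_cons_self, succ_nsmul', ← add_assoc, ← restrictS_fire_self]
      exact ih hl
    · rw [omitS_cons_of_ne hv, List.count_cons_of_ne hv]
      refine ⟨le_add_right hlegal, ?_⟩
      rw [sfire_add hlegal, ← restrictS_fire_of_ne]
      exact ih hl

end OmitFirings

/-- A legal firing sequence from `c` to `d` in the sinkless model, in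
which `s` is fired exactly `m` times, induces (by omitting the firings of `s`) a legal
s-firing sequence from `ĉ + m·β_s` to `d̂`. -/
theorem legalSeq_restricts [Nonempty V] (src tgt : E → V)
    (hG : StronglyConnected src tgt) (s : V) (l : List V) (c d : V → ℕ)
    (h : LegalSeq src tgt l c d) :
    SLegalSeq src tgt s
      (l.filterMap fun v => if hv : v = s then none else some (⟨v, hv⟩ : {v : V // v ≠ s}))
      (restrictS s c + l.count s • betaS src tgt s) (restrictS s d) :=
  legalSeq_restricts_general h

end SandpileBM
end

section
/- If ĉ is an s-recurrent configuration, then the chip configuration c̄ + (deg⁺(s)·r(s))·δ_s is a recurrent configuration in the sinkless model, where r is the primitive period vector of G. -/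
open Finset Polynomial

namespace SandpileBM

variable {V E : Type} [Fintype V] [DecidableEq V] [Fintype E] [DecidableEq E]

/-!
A closed legal sequence `l` at `c` in which every vertex fires makes `c` recurrent: given a legal
sequence `t` from `c` to `d`, iterate `l` until it contains `t`. By the exchange property of
chip-firing (`LegalSeq.diff`), what is left of the iterate after deleting `t` is a legal sequence
from `d` back to `c`.

Such a sequence exists at any configuration `b` with `b v ≥ deg⁺(v) * r v` for all `v`: fire each
`v` exactly `r v` times. It remains to carry it to `c`. An `s`-recurrent configuration is the
stabilization of one that is large away from `s`, so for a suitable `b` with `b s = c s` some legal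
sequence leads from `b` to a configuration `d` that agrees with `c` away from `s`. By exchange, `d`
has a closed sequence with the same firing counts, in which the firings of `s` may come first as
`d s ≥ deg⁺(s) * r s`. Since `c s ≥ deg⁺(s) * r s` as well, the reordered sequence is legal at `c`.
-/

section Firing

omit [Fintype V] [DecidableEq E]

variable {src tgt : E → V} {c d e : V → ℕ} {l t : List V} {v w s : V}

theorem fire_apply_add (hv : outdeg src v ≤ c v) (w : V) :
    fire src tgt c v w + (if w = v then outdeg src v else 0) = c w + numEdges src tgt v w := by
  unfold fire
  split_ifs with hw
  · subst hw
    omega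
  · rfl

theorem le_fire_of_ne (hwv : w ≠ v) : c w ≤ fire src tgt c v w := by
  simp [fire, hwv]

theorem fire_comm (hvw : v ≠ w) (hv : outdeg src v ≤ c v) (hw : outdeg src w ≤ c w) :
    fire src tgt (fire src tgt c v) w = fire src tgt (fire src tgt c w) v := by
  have hv' : outdeg src v ≤ fire src tgt c w v := hv.trans (le_fire_of_ne hvw)
  have hw' : outdeg src w ≤ fire src tgt c v w := hw.trans (le_fire_of_ne hvw.symm)
  funext u
  have hcv := fire_apply_add (tgt := tgt) hv u
  have hcvw := fire_apply_add (tgt := tgt) hw' u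
  have hcw := fire_apply_add (tgt := tgt) hw u
  have hcwv := fire_apply_add (tgt := tgt) hv' u
  omega

theorem legalSeq_append :
    LegalSeq src tgt (l ++ t) c e ↔ ∃ d, LegalSeq src tgt l c d ∧ LegalSeq src tgt t d e := by
  induction l generalizing c with
  | nil => simp [LegalSeq]
  | cons v l ih => simp [LegalSeq, ih, and_assoc]

theorem reach_iff_exists_legalSeq : Reach src tgt c d ↔ ∃ l, LegalSeq src tgt l c d := by
  constructor
  · intro h
    induction h using Relation.ReflTransGen.head_induction_on with
    | refl => exact ⟨[], rfl⟩
    | head hstep _ ih =>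
      obtain ⟨v, hv, rfl⟩ := hstep
      obtain ⟨l, hl⟩ := ih
      exact ⟨v :: l, hv, hl⟩
  · rintro ⟨l, hl⟩
    induction l generalizing c with
    | nil => exact hl ▸ Relation.ReflTransGen.refl
    | cons v l ih => exact Relation.ReflTransGen.head ⟨v, hl.1, rfl⟩ (ih hl.2)

theorem exists_legalSeq_of_outdeg_mul_count_le (h : ∀ v, outdeg src v * l.count v ≤ c v) :
    ∃ d, LegalSeq src tgt l c d := by
  induction l generalizing c with
  | nil => exact ⟨c, rfl⟩
  | cons v l ih =>
    have hv := h v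
    rw [List.count_cons_self, mul_add, mul_one] at hv
    have hfire (w : V) : outdeg src w * l.count w ≤ fire src tgt c v w := by
      rcases eq_or_ne w v with rfl | hwv
      · simp only [fire, if_true]
        omega
      · rw [← List.count_cons_of_ne hwv.symm]
        exact (h w).trans (le_fire_of_ne hwv)
    obtain ⟨d, hd⟩ := ih hfire
    exact ⟨d, by omega, hd⟩

namespace LegalSeq

theorem apply_add_outdeg_mul_count (h : LegalSeq src tgt l c d) (w : V) :
    d w + outdeg src w * l.count w = c w + (l.map fun v => numEdges src tgt v w).sum := by
  induction l generalizing c with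
  | nil => simp [show d = c from h]
  | cons v l ih =>
    have hl := ih h.2
    have hv := fire_apply_add (tgt := tgt) h.1 w
    rw [List.map_cons, List.sum_cons]
    rcases eq_or_ne w v with rfl | hwv
    · rw [if_pos rfl] at hv
      rw [List.count_cons_self, mul_add, mul_one]
      omega
    · rw [if_neg hwv] at hv
      rw [List.count_cons_of_ne hwv.symm]
      omega

theorem eq_of_perm_of_closed (ht : LegalSeq src tgt t e e) (hlt : l.Perm t)
    (hl : LegalSeq src tgt l c d) : d = c := by
  funext w
  have hd := hl.apply_add_outdeg_mul_count w
  have he := ht.apply_add_outdeg_mul_count w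
  rw [hlt.count_eq, (hlt.map _).sum_eq] at hd
  omega

theorem erase (hl : LegalSeq src tgt l c d) (hmem : v ∈ l) (hv : outdeg src v ≤ c v) :
    LegalSeq src tgt (l.erase v) (fire src tgt c v) d := by
  induction l generalizing c with
  | nil => simp at hmem
  | cons u l ih =>
    rcases eq_or_ne u v with rfl | huv
    · simpa only [List.erase_cons_head] using hl.2
    · rw [List.erase_cons_tail (by simpa using huv)]
      refine ⟨hl.1.trans (le_fire_of_ne huv), ?_⟩
      rw [fire_comm huv.symm hv hl.1]
      exact ih hl.2 (List.mem_of_ne_of_mem huv.symm hmem) (hv.trans (le_fire_of_ne huv.symm))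

theorem diff (hl : LegalSeq src tgt l c e) (ht : LegalSeq src tgt t c d) (htl : t.Subperm l) :
    LegalSeq src tgt (l.diff t) d e := by
  induction t generalizing l c with
  | nil => simpa only [show d = c from ht, List.diff_nil] using hl
  | cons v t ih =>
    rw [List.diff_cons]
    refine ih (hl.erase (htl.subset List.mem_cons_self) ht.1) ht.2 ?_
    simpa only [List.erase_cons_head] using htl.erase v

theorem flatten_replicate (hl : LegalSeq src tgt l c c) (n : ℕ) :
    LegalSeq src tgt (List.replicate n l).flatten c c := by
  induction n with
  | zero => rfl
  | succ n ih => exact legalSeq_append.2 ⟨c, hl, ih⟩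

theorem exists_perm_closed_of_reach (hl : LegalSeq src tgt l c c) (hcd : Reach src tgt c d) :
    ∃ t, t.Perm l ∧ LegalSeq src tgt t d d := by
  obtain ⟨t, ht⟩ := reach_iff_exists_legalSeq.1 hcd
  have hsub : t.Subperm (l ++ t) := (List.sublist_append_right l t).subperm
  refine ⟨(l ++ t).diff t, ?_, (legalSeq_append.2 ⟨c, hl, ht⟩).diff ht hsub⟩
  rw [List.perm_iff_count]
  intro v
  rw [List.count_diff, List.count_append, Nat.add_sub_cancel]

end LegalSeq

theorem recurrent_of_closed_legalSeq [Nonempty V] (hl : LegalSeq src tgt l c c)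
    (hmem : ∀ v, v ∈ l) : Recurrent src tgt c := by
  constructor
  · cases l with
    | nil => simp at hmem
    | cons v l => exact fun hstable => (hstable v).not_ge hl.1
  · intro d hcd
    obtain ⟨t, ht⟩ := reach_iff_exists_legalSeq.1 hcd
    have hsub : t.Subperm (List.replicate t.length l).flatten := by
      rw [List.subperm_iff_count]
      intro v
      calc t.count v ≤ t.length := List.count_le_length
        _ ≤ t.length * l.count v := Nat.le_mul_of_pos_right _ (List.count_pos_iff.2 (hmem v))
        _ = (List.replicate t.length l).flatten.count v := by simp [List.count_flatten]
    exact reach_iff_exists_legalSeq.2 ⟨_, (hl.flatten_replicate t.length).diff ht hsub⟩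

end Firing

section SConfigurations

omit [Fintype V] [DecidableEq E]

variable {src tgt : E → V} {c d d' : V → ℕ} {l : List V} {v s : V}

omit [Fintype E] in
theorem restrictS_extendS_add_smul_deltaS (x : {v : V // v ≠ s} → ℕ) (k : ℕ) :
    restrictS s (extendS s x + k • deltaS s) = x := by
  funext v
  simp [restrictS, extendS, deltaS, v.2]

omit [Fintype E] in
theorem extendS_add_smul_deltaS_apply_self (x : {v : V // v ≠ s} → ℕ) (k : ℕ) :
    (extendS s x + k • deltaS s) s = k := by
  simp [extendS, deltaS]

theorem restrictS_fire (v : {v : V // v ≠ s}) :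
    restrictS s (fire src tgt c v) = sfire src tgt s (restrictS s c) v := by
  funext w
  simp [restrictS, fire, sfire, Subtype.ext_iff]

theorem exists_reach_of_sReach {y : {v : V // v ≠ s} → ℕ}
    (h : SReach src tgt s (restrictS s c) y) :
    ∃ d, Reach src tgt c d ∧ restrictS s d = y ∧ c s ≤ d s := by
  generalize hx : restrictS s c = x at h
  induction h using Relation.ReflTransGen.head_induction_on generalizing c with
  | refl => exact ⟨c, Relation.ReflTransGen.refl, hx, le_rfl⟩
  | head hstep _ ih =>
    subst hx
    obtain ⟨v, hv, rfl⟩ := hstep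
    obtain ⟨d, hcd, hdy, hd⟩ := ih (restrictS_fire v)
    exact ⟨d, hcd.head ⟨v, hv, rfl⟩, hdy, (le_fire_of_ne v.2.symm).trans hd⟩

theorem LegalSeq.exists_of_restrictS_eq (hl : LegalSeq src tgt l d d') (hs : s ∉ l)
    (hcd : restrictS s c = restrictS s d) : ∃ c', LegalSeq src tgt l c c' := by
  induction l generalizing c d with
  | nil => exact ⟨c, rfl⟩
  | cons v l ih =>
    rw [List.mem_cons, not_or] at hs
    let v' : {v : V // v ≠ s} := ⟨v, Ne.symm hs.1⟩
    have hv : outdeg src v ≤ c v := (congrFun hcd v').ge.trans' hl.1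
    have hfire : restrictS s (fire src tgt c v) = restrictS s (fire src tgt d v) := by
      rw [restrictS_fire v', restrictS_fire v', hcd]
    obtain ⟨c', hc'⟩ := ih hl.2 hs.2 hfire
    exact ⟨c', hv, hc'⟩

theorem exists_legalSeq_replicate {n : ℕ} (h : outdeg src s * n ≤ c s) :
    ∃ d, LegalSeq src tgt (List.replicate n s) c d := by
  refine exists_legalSeq_of_outdeg_mul_count_le fun v => ?_
  rcases eq_or_ne v s with rfl | hvs
  · rwa [List.count_replicate_self]
  · simp [List.count_replicate, hvs.symm]

theorem LegalSeq.restrictS_eq {c' : V → ℕ} (hc : LegalSeq src tgt l c c')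
    (hd : LegalSeq src tgt l d d') (hcd : restrictS s c = restrictS s d) :
    restrictS s c' = restrictS s d' := by
  funext v
  have hv : c v = d v := congrFun hcd v
  have hc' := hc.apply_add_outdeg_mul_count v
  have hd' := hd.apply_add_outdeg_mul_count v
  change c' v = d' v
  omega

-- Firing `s` first makes the number of chips at `s` irrelevant for the rest of the sequence.
theorem LegalSeq.exists_perm_closed_of_restrictS_eq (hl : LegalSeq src tgt l d d)
    (hcd : restrictS s c = restrictS s d) (hc : outdeg src s * l.count s ≤ c s)
    (hd : outdeg src s * l.count s ≤ d s) :
    ∃ t, t.Perm l ∧ LegalSeq src tgt t c c := by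
  set sFirings := List.replicate (l.count s) s with hsFirings
  have hsub : sFirings.Subperm l := (List.replicate_sublist_iff.2 le_rfl).subperm
  have hs : s ∉ l.diff sFirings := by
    rw [← List.count_eq_zero, List.count_diff, hsFirings, List.count_replicate_self, Nat.sub_self]
  obtain ⟨c₁, hcc₁⟩ := exists_legalSeq_replicate (tgt := tgt) hc
  obtain ⟨d₁, hdd₁⟩ := exists_legalSeq_replicate (tgt := tgt) hd
  obtain ⟨c₂, hc₁c₂⟩ := (hl.diff hdd₁ hsub).exists_of_restrictS_eq hs
    (hcc₁.restrictS_eq hdd₁ hcd)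
  have hperm : (sFirings ++ l.diff sFirings).Perm l :=
    List.subperm_append_diff_self_of_count_le (List.subperm_ext_iff.1 hsub)
  have hcc₂ := legalSeq_append.2 ⟨c₁, hcc₁, hc₁c₂⟩
  have hclosed : c₂ = c := hl.eq_of_perm_of_closed hperm hcc₂
  exact ⟨_, hperm, hclosed ▸ hcc₂⟩

end SConfigurations

section PeriodVector

omit [DecidableEq E]

variable {src tgt : E → V} {c : V → ℕ} {r : V → ℕ} {s : V}

omit [Fintype V] [Fintype E] in
theorem exists_list_count_eq [Finite V] (r : V → ℕ) : ∃ l : List V, ∀ v, l.count v = r v := by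
  refine ⟨(Finsupp.toMultiset (Finsupp.equivFunOnFinite.symm r)).toList, fun v => ?_⟩
  rw [← Multiset.coe_count, Multiset.coe_toList, Finsupp.count_toMultiset]
  rfl

omit [Fintype E] in
theorem sum_map_eq_sum_count_mul (l : List V) (f : V → ℕ) :
    (l.map f).sum = ∑ v, l.count v * f v := by
  rw [Finset.sum_list_map_count]
  refine Finset.sum_subset (Finset.subset_univ _) fun v _ hv => ?_
  rw [List.count_eq_zero.2 (by simpa using hv), zero_smul]

theorem exists_closed_legalSeq_of_lapApply_eq_zero
    (hker : lapApply src tgt (fun v => (r v : ℤ)) = 0) (hc : ∀ v, outdeg src v * r v ≤ c v) :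
    ∃ l, (∀ v, l.count v = r v) ∧ LegalSeq src tgt l c c := by
  obtain ⟨l, hcount⟩ := exists_list_count_eq r
  obtain ⟨d, hd⟩ : ∃ d, LegalSeq src tgt l c d :=
    exists_legalSeq_of_outdeg_mul_count_le (by simpa only [hcount] using hc)
  have hdc : d = c := by
    funext w
    have hbalance := hd.apply_add_outdeg_mul_count w
    have hw : outdeg src w * r w = ∑ v, r v * numEdges src tgt v w := by
      have hlap : (outdeg src w : ℤ) * r w = ∑ v, (numEdges src tgt v w : ℤ) * r v :=
        sub_eq_zero.1 (congrFun hker w)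
      simp only [mul_comm (r _)]
      exact_mod_cast hlap
    rw [sum_map_eq_sum_count_mul] at hbalance
    simp only [hcount] at hbalance
    omega
  exact ⟨l, hcount, hdc ▸ hd⟩

theorem recurrent_of_sReach_restrictS (hpos : ∀ v, 0 < r v)
    (hker : lapApply src tgt (fun v => (r v : ℤ)) = 0) {x : {v : V // v ≠ s} → ℕ}
    (hx : ∀ v, outdeg src v.1 * r v.1 ≤ x v) (hxc : SReach src tgt s x (restrictS s c))
    (hs : outdeg src s * r s ≤ c s) : Recurrent src tgt c := by
  have : Nonempty V := ⟨s⟩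
  set b := extendS s x + c s • deltaS s
  have hbx : restrictS s b = x := restrictS_extendS_add_smul_deltaS x (c s)
  have hbs : b s = c s := extendS_add_smul_deltaS_apply_self x (c s)
  have hb (v : V) : outdeg src v * r v ≤ b v := by
    rcases eq_or_ne v s with rfl | hv
    · rwa [hbs]
    · exact (hx ⟨v, hv⟩).trans (congrFun hbx ⟨v, hv⟩).ge
  obtain ⟨l, hcount, hl⟩ := exists_closed_legalSeq_of_lapApply_eq_zero hker hb
  obtain ⟨d, hbd, hdc, hbds⟩ := exists_reach_of_sReach (hbx ▸ hxc)
  obtain ⟨l', hl'l, hl'⟩ := hl.exists_perm_closed_of_reach hbd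
  have hcount' (v : V) : l'.count v = r v := by rw [hl'l.count_eq, hcount]
  have hcs : outdeg src s * l'.count s ≤ c s := by rwa [hcount']
  obtain ⟨t, htl', ht⟩ := hl'.exists_perm_closed_of_restrictS_eq hdc.symm hcs
    (hcs.trans (hbs.ge.trans hbds))
  refine recurrent_of_closed_legalSeq ht fun v => ?_
  rw [← List.count_pos_iff, htl'.count_eq, hcount']
  exact hpos v

end PeriodVector

section Stabilization

/-- Every vertex has a directed path to `s`, so that `s` is a global sink once its outgoing edges
are removed: the part of strong connectivity that makes `s`-stabilization terminate. -/
def GloballyReachable (src tgt : E → V) (s : V) : Prop :=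
  ∀ v, Relation.ReflTransGen (fun a b => ∃ e : E, src e = a ∧ tgt e = b) v s

omit [Fintype V] [DecidableEq E]

variable {src tgt : E → V} {s : V}

omit [DecidableEq V] [Fintype E] in
theorem exists_isWalk {v w : V}
    (h : Relation.ReflTransGen (fun a b => ∃ e : E, src e = a ∧ tgt e = b) v w) :
    ∃ l, IsWalk src tgt l v w := by
  induction h using Relation.ReflTransGen.head_induction_on with
  | refl => exact ⟨[], rfl⟩
  | head hstep _ ih =>
    obtain ⟨e, rfl, rfl⟩ := hstep
    obtain ⟨l, hl⟩ := ih
    exact ⟨e :: l, rfl, hl⟩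

omit [DecidableEq V] [Fintype E] in
theorem exists_rank (hs : GloballyReachable src tgt s) :
    ∃ rk : V → ℕ, ∀ v, v ≠ s → ∃ e, src e = v ∧ rk (tgt e) < rk v := by
  classical
  have hwalk (v : V) : ∃ n l, IsWalk src tgt l v s ∧ l.length = n := by
    obtain ⟨l, hl⟩ := exists_isWalk (hs v)
    exact ⟨_, l, hl, rfl⟩
  refine ⟨fun v => Nat.find (hwalk v), fun v hv => ?_⟩
  obtain ⟨l, hl, hlen⟩ := Nat.find_spec (hwalk v)
  cases l with
  | nil => exact absurd hl hv
  | cons e l =>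
    have hle : Nat.find (hwalk (tgt e)) ≤ l.length := Nat.find_min' _ ⟨l, hl.2, rfl⟩
    exact ⟨e, hl.1, hle.trans_lt (Nat.lt_of_succ_le hlen.le)⟩

theorem sum_numEdges_smul [Fintype V] {M : Type*} [AddCommMonoid M] (v : V) (f : V → M) :
    ∑ w, numEdges src tgt v w • f w = ∑ e with src e = v, f (tgt e) := by
  rw [← Finset.sum_fiberwise _ tgt]
  refine Finset.sum_congr rfl fun w _ => ?_
  rw [Finset.filter_filter, Finset.sum_congr rfl (g := fun _ => f w)
    (fun e he => by rw [(Finset.mem_filter.1 he).2.2]), Finset.sum_const]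
  rfl

-- The weight `M ^ (n - rk v)` grows along some edge out of `v` by a factor exceeding the
-- out-degree of `v`.
theorem exists_strictly_subharmonic [Finite V] (hs : GloballyReachable src tgt s) :
    ∃ g : V → ℕ, ∀ v, v ≠ s → outdeg src v * g v < ∑ e with src e = v, g (tgt e) := by
  obtain ⟨rk, hrk⟩ := exists_rank hs
  obtain ⟨n, hn⟩ := (Set.finite_range rk).bddAbove
  set M := Fintype.card E + 1
  refine ⟨fun v => M ^ (n - rk v), fun v hv => ?_⟩
  obtain ⟨e, he, hlt⟩ := hrk v hv
  have hle : rk v ≤ n := hn ⟨v, rfl⟩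
  have houtdeg : outdeg src v < M := Nat.lt_succ_of_le (Finset.card_le_univ _)
  have hM : 0 < M := Nat.succ_pos _
  calc outdeg src v * M ^ (n - rk v)
      < M * M ^ (n - rk v) := Nat.mul_lt_mul_of_pos_right houtdeg (pow_pos hM _)
    _ = M ^ (n - rk v + 1) := (pow_succ' _ _).symm
    _ ≤ M ^ (n - rk (tgt e)) := Nat.pow_le_pow_right hM (by omega)
    _ ≤ ∑ f with src f = v, M ^ (n - rk (tgt f)) :=
        Finset.single_le_sum (f := fun f => M ^ (n - rk (tgt f))) (fun _ _ => Nat.zero_le _)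
          (Finset.mem_filter.2 ⟨Finset.mem_univ e, he⟩)

theorem exists_strictly_superharmonic [Finite V] (hs : GloballyReachable src tgt s) :
    ∃ h : V → ℕ, ∀ v, v ≠ s → ∑ e with src e = v, h (tgt e) < outdeg src v * h v := by
  obtain ⟨g, hg⟩ := exists_strictly_subharmonic hs
  obtain ⟨N, hN⟩ := (Set.finite_range g).bddAbove
  have hgN (v : V) : g v ≤ N := hN ⟨v, rfl⟩
  refine ⟨fun v => N - g v, fun v hv => ?_⟩
  have hconst : ∑ e with src e = v, (N - g (tgt e)) + ∑ e with src e = v, g (tgt e) =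
      outdeg src v * (N - g v) + outdeg src v * g v := by
    rw [← Finset.sum_add_distrib, ← mul_add]
    simp only [Nat.sub_add_cancel (hgN _), Finset.sum_const, smul_eq_mul, outdeg]
  have hlt := hg v hv
  beta_reduce
  omega

theorem sfire_apply_add {x : {v : V // v ≠ s} → ℕ} {v : {v : V // v ≠ s}}
    (hv : outdeg src v.1 ≤ x v) (w : {v : V // v ≠ s}) :
    sfire src tgt s x v w + (if w = v then outdeg src v.1 else 0) =
      x w + numEdges src tgt v.1 w.1 := by
  unfold sfire
  split_ifs with hw
  · subst hw
    omega
  · rfl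

theorem sum_sfire_mul_add [Fintype V] {x : {v : V // v ≠ s} → ℕ} {v : {v : V // v ≠ s}}
    (hv : outdeg src v.1 ≤ x v) (h : {v : V // v ≠ s} → ℕ) :
    ∑ w, sfire src tgt s x v w * h w + outdeg src v.1 * h v =
      ∑ w, x w * h w + ∑ w, numEdges src tgt v.1 w.1 * h w := by
  have hite : outdeg src v.1 * h v = ∑ w, (if w = v then outdeg src v.1 else 0) * h w := by
    simp
  rw [hite, ← Finset.sum_add_distrib, ← Finset.sum_add_distrib]
  simp only [← add_mul, sfire_apply_add hv]

theorem wellFounded_sFireStep [Finite V] (hs : GloballyReachable src tgt s) :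
    WellFounded fun y x => SFireStep src tgt s x y := by
  have := Fintype.ofFinite V
  obtain ⟨h, hh⟩ := exists_strictly_superharmonic hs
  refine Subrelation.wf (fun {y x} hstep => ?_)
    (measure fun x : {v : V // v ≠ s} → ℕ => ∑ v, x v * h v.1).wf
  obtain ⟨v, hv, rfl⟩ := hstep
  have hbalance := sum_sfire_mul_add (tgt := tgt) hv fun w => h w.1
  have hsub : ∑ w : {v : V // v ≠ s}, numEdges src tgt v.1 w.1 * h w.1 ≤
      ∑ e with src e = v.1, h (tgt e) := by
    rw [← sum_numEdges_smul v.1 h, ← Fintype.sum_subtype_add_sum_subtype (· ≠ s)]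
    exact Nat.le_add_right _ _
  have hlt := hh v.1 v.2
  change ∑ w, sfire src tgt s x v w * h w.1 < ∑ w, x w * h w.1
  omega

theorem exists_sReach_sStable [Finite V] (hs : GloballyReachable src tgt s)
    (x : {v : V // v ≠ s} → ℕ) : ∃ y, SReach src tgt s x y ∧ SStable src s y := by
  obtain ⟨y, hxy, hmin⟩ := (wellFounded_sFireStep hs).has_min {y | SReach src tgt s x y}
    ⟨x, Relation.ReflTransGen.refl⟩
  refine ⟨y, hxy, fun v => ?_⟩
  by_contra! hv
  have hstep : SFireStep src tgt s y (sfire src tgt s y v) := ⟨v, hv, rfl⟩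
  exact hmin _ (hxy.tail hstep) hstep

theorem sReach_stab [Finite V] (hs : GloballyReachable src tgt s)
    (x : {v : V // v ≠ s} → ℕ) : SReach src tgt s x (stab src tgt s x) :=
  (Classical.epsilon_spec (exists_sReach_sStable hs x)).1

end Stabilization

omit [DecidableEq E] in
theorem extend_sRecurrent_recurrent_general (src tgt : E → V) (s : V)
    (hs : GloballyReachable src tgt s) (r : V → ℕ) (hpos : ∀ v, 0 < r v)
    (hker : lapApply src tgt (fun v => (r v : ℤ)) = 0)
    (c : V → ℕ) (hc : SRecurrent src tgt s (restrictS s c)) (hcs : outdeg src s * r s ≤ c s) :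
    Recurrent src tgt c := by
  obtain ⟨x, hx⟩ := hc fun v => outdeg src v.1 * r v.1
  exact recurrent_of_sReach_restrictS hpos hker (fun v => Nat.le_add_right _ (x v))
    (hx ▸ sReach_stab hs _) hcs

/-- If `ĉ` is s-recurrent then `c̄ + (deg⁺(s)·r(s))·δ_s` is a recurrent
configuration of the sinkless model. -/
theorem extend_sRecurrent_recurrent [Nonempty V] (src tgt : E → V)
    (hG : StronglyConnected src tgt) (s : V) (r : V → ℕ)
    (hr : IsPeriodVector src tgt r) (ch : {v : V // v ≠ s} → ℕ)
    (h : SRecurrent src tgt s ch) :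
    Recurrent src tgt (extendS s ch + (outdeg src s * r s) • deltaS s) :=
  extend_sRecurrent_recurrent_general src tgt s (fun v => hG v s) r hr.1 hr.2.2.1 _
    (by rwa [restrictS_extendS_add_smul_deltaS]) (extendS_add_smul_deltaS_apply_self _ _).ge

end SandpileBM
end
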